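/- If G is a connected graph with exactly three vertices, or a star-shaped graph (a graph with one center vertex adjacent to every other vertex and no edges between the non-center vertices), then lim_{δ→0+} α_c^1(δ) = ∞; for every other finite connected graph G with |V|≥3, lim_{δ→0+} α_c^1(δ) < ∞. -/

import Mathlib

open scoped BigOperators Classical ENNReal
open Filter Topology

noncomputable section
namespace ORRW

/-- Probability measures on a finite type `A`, topologized as a subset of `ℝ^A`. -/
abbrev ProbMeas (A : Type) [Fintype A] : Type :=
  {p : A → ℝ // (∀ a, 0 ≤ p a) ∧ ∑ a, p a = 1}

/-- Relative entropy `R(γ‖ρ)` between two finitely supported "rows", valued in `EReal`,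
with `+∞` when absolute continuity fails. -/
def relEnt {A : Type} [Fintype A] (γ ρ : A → ℝ) : EReal :=
  if ∀ a, ρ a = 0 → γ a = 0 then ((∑ a, γ a * Real.log (γ a / ρ a) : ℝ) : EReal)
  else (⊤ : EReal)

/-- `∫ R(q‖p) dν = Σ_a ν(a) · R(q(a,·)‖p(a,·))`. -/
def relEntInt {A : Type} [Fintype A] (ν : A → ℝ) (q p : A → A → ℝ) : EReal :=
  ∑ a, (ν a : EReal) * relEnt (q a) (p a)

/-- `ν` is an invariant measure of the kernel `q`. -/
def Invariant {A : Type} [Fintype A] (ν : A → ℝ) (q : A → A → ℝ) : Prop :=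
  ∀ y, ∑ x, ν x * q x y = ν y

/-- Extended-real logarithm: `⊥` at nonpositive arguments. -/
def elog (x : ℝ) : EReal := if x ≤ 0 then (⊥ : EReal) else ((Real.log x : ℝ) : EReal)

/-- Empirical measure of a finite trajectory `f : Fin (n+1) → A`. -/
def empMeas {A : Type} [Fintype A] [DecidableEq A] (n : ℕ) (f : Fin (n + 1) → A) :
    ProbMeas A :=
  ⟨fun a => ((Finset.univ.filter (fun i => f i = a)).card : ℝ) / (n + 1),
    fun a => by positivity, by
      have key : ∑ a : A, ((Finset.univ.filter (fun i => f i = a)).card) = n + 1 := by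
        have h := Finset.card_eq_sum_card_fiberwise
          (s := (Finset.univ : Finset (Fin (n + 1)))) (t := (Finset.univ : Finset A))
          (f := f) (fun i _ => Finset.mem_univ (f i))
        simpa using h.symm
      have key' : ∑ a : A, (((Finset.univ.filter (fun i => f i = a)).card : ℝ)) = (n : ℝ) + 1 := by
        have h2 := congrArg (fun m : ℕ => (m : ℝ)) key
        push_cast at h2
        simpa using h2
      rw [← Finset.sum_div, key', div_self (by positivity)]⟩

section Graph

variable {V : Type} [Fintype V] [DecidableEq V]

/-- Weight of an edge given the set `F` of already traversed edges. -/
def gw (δ : ℝ) (F : Finset (Sym2 V)) (e : Sym2 V) : ℝ := if e ∈ F then δ else 1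

/-- The transition kernel `p̂_F` on `V`. -/
def phat (G : SimpleGraph V) [DecidableRel G.Adj] (δ : ℝ) (F : Finset (Sym2 V))
    (x y : V) : ℝ :=
  if G.Adj x y then gw δ F s(x, y) / ∑ z ∈ G.neighborFinset x, gw δ F s(x, z) else 0

/-- Two edges are adjacent iff they share a vertex. -/
def edgeAdj (e e' : Sym2 V) : Prop := ∃ v, v ∈ e ∧ v ∈ e'

/-- `x` is a vertex of the edge set `F`. -/
def memVerts (F : Finset (Sym2 V)) (x : V) : Prop := ∃ e ∈ F, x ∈ e

/-- `𝒯_G`: stochastic matrices on `V` adapted to `G`. -/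
def TG (G : SimpleGraph V) : Set (V → V → ℝ) :=
  {q | (∀ x y, 0 ≤ q x y) ∧ (∀ x, ∑ y, q x y = 1) ∧ ∀ x y, q x y ≠ 0 → G.Adj x y}

/-- `𝒯(F)`: stochastic kernels from the vertex set of `F` to `V`, supported on `F`. -/
def TE (F : Finset (Sym2 V)) : Set (V → V → ℝ) :=
  {q | (∀ x y, 0 ≤ q x y) ∧ (∀ x, memVerts F x → ∑ y, q x y = 1) ∧
    ∀ x y, q x y ≠ 0 → s(x, y) ∈ F}

/-- `ℰ`: admissible increasing sequences of traversed edge sets. -/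
def seqE (G : SimpleGraph V) [DecidableRel G.Adj] (v₁ : V) :
    Set (Fin G.edgeFinset.card → Finset (Sym2 V)) :=
  {Es | (∀ k, Es k ⊆ G.edgeFinset) ∧ (∀ k, (Es k).card = (k : ℕ) + 1) ∧
    (∀ k l : Fin G.edgeFinset.card, (k : ℕ) + 1 = (l : ℕ) → Es k ⊂ Es l) ∧
    (∀ k : Fin G.edgeFinset.card, (k : ℕ) = 0 → ∃ e ∈ Es k, v₁ ∈ e) ∧
    (∀ k l : Fin G.edgeFinset.card, (k : ℕ) + 1 = (l : ℕ) →
      ∀ e ∈ Es l \ Es k, ∃ e' ∈ Es k, edgeAdj e e')}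

/-- The rate function `I_δ`. -/
def Ifun (G : SimpleGraph V) [DecidableRel G.Adj] (v₁ : V) (δ : ℝ) (ν : ProbMeas V) : EReal :=
  sInf { c : EReal |
    ∃ (νs : Fin G.edgeFinset.card → ProbMeas V) (r : Fin G.edgeFinset.card → ℝ)
      (Es : Fin G.edgeFinset.card → Finset (Sym2 V))
      (qs : Fin G.edgeFinset.card → V → V → ℝ),
      Es ∈ seqE G v₁ ∧ (∀ k, 0 ≤ r k) ∧ (∑ k, r k = 1) ∧
      (∀ k x, (νs k).1 x ≠ 0 → memVerts (Es k) x) ∧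
      (∀ x, ∑ k, r k * (νs k).1 x = ν.1 x) ∧
      (∀ k, qs k ∈ TE (Es k)) ∧ (∀ k, Invariant (νs k).1 (qs k)) ∧
      c = ∑ k, ((r k : ℝ) : EReal) * relEntInt (νs k).1 (qs k) (phat G δ (Es k)) }

/-- Edges traversed along a path, given as a list of consecutively visited vertices. -/
def pathEdges : List V → Finset (Sym2 V)
  | [] => ∅
  | [_] => ∅
  | x :: y :: t => insert s(x, y) (pathEdges (y :: t))

/-- Product of one-step ORRW transition probabilities along a trajectory,
the trajectory being listed in reverse chronological order. -/
def stepsProb (G : SimpleGraph V) [DecidableRel G.Adj] (δ : ℝ) : List V → ℝ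
  | [] => 1
  | [_] => 1
  | y :: x :: t => phat G δ (pathEdges (x :: t).reverse) x y * stepsProb G δ (x :: t)

/-- The law of `(X_0, …, X_n)` for the `δ`-ORRW started at `v₁`. -/
def trajProb (G : SimpleGraph V) [DecidableRel G.Adj] (δ : ℝ) (v₁ : V) (n : ℕ)
    (f : Fin (n + 1) → V) : ℝ :=
  if f 0 = v₁ then stepsProb G δ (List.ofFn f).reverse else 0

/-- `P_{v₁}(L_{n+1} ∈ C)`: the probability that the empirical measure of the first
`n+1` positions of the `δ`-ORRW lies in `C`. -/
def probEmp (G : SimpleGraph V) [DecidableRel G.Adj] (δ : ℝ) (v₁ : V) (n : ℕ)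
    (C : Set (ProbMeas V)) : ℝ :=
  ∑ f : Fin (n + 1) → V, if empMeas n f ∈ C then trajProb G δ v₁ n f else 0

/-- The family `𝒮` of edge sets of connected subgraphs having an edge at `v₁`. -/
def scrS (G : SimpleGraph V) [DecidableRel G.Adj] (v₁ : V) : Set (Finset (Sym2 V)) :=
  {F | F ⊆ G.edgeFinset ∧ (∃ e ∈ F, v₁ ∈ e) ∧
    ∀ x y : V, memVerts F x → memVerts F y →
      (SimpleGraph.fromEdgeSet (↑F : Set (Sym2 V))).Reachable x y}

/-- `𝒮₀` is a decreasing subset of `𝒮`. -/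
def DecreasingIn (G : SimpleGraph V) [DecidableRel G.Adj] (v₁ : V)
    (S0 : Set (Finset (Sym2 V))) : Prop :=
  ∀ F₁ F₂, F₁ ∈ scrS G v₁ → F₂ ∈ scrS G v₁ → F₁ ⊆ F₂ → F₂ ∈ S0 → F₁ ∈ S0

/-- `P_{v₁}(T_{𝒮₀} > n)`. -/
def probTgt (G : SimpleGraph V) [DecidableRel G.Adj] (δ : ℝ) (v₁ : V)
    (S0 : Set (Finset (Sym2 V))) (n : ℕ) : ℝ :=
  ∑ f : Fin (n + 1) → V,
    if ∀ k, 1 ≤ k → k ≤ n → pathEdges ((List.ofFn f).take (k + 1)) ∈ S0 then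
      trajProb G δ v₁ n f
    else 0

/-- `P_{v₁}(C_E > n)` for the edge cover time `C_E`. -/
def probCgt (G : SimpleGraph V) [DecidableRel G.Adj] (δ : ℝ) (v₁ : V) (n : ℕ) : ℝ :=
  ∑ f : Fin (n + 1) → V,
    if ¬ G.edgeFinset ⊆ pathEdges (List.ofFn f) then trajProb G δ v₁ n f else 0

/-- `E_{v₁}[exp (α T_{𝒮₀})]`, valued in `ℝ≥0∞`; the stopping time takes values in
`{1, 2, …} ∪ {∞}`. -/
def expT (G : SimpleGraph V) [DecidableRel G.Adj] (δ : ℝ) (v₁ : V)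
    (S0 : Set (Finset (Sym2 V))) (α : ℝ) : ℝ≥0∞ :=
  (∑' n : ℕ, ENNReal.ofReal
      (Real.exp (α * (n + 1)) * (probTgt G δ v₁ S0 n - probTgt G δ v₁ S0 (n + 1)))) +
    (if 0 < α then (⊤ : ℝ≥0∞) else if α = 0 then 1 else 0) *
      ENNReal.ofReal (⨅ n : ℕ, probTgt G δ v₁ S0 n)

/-- `E_{v₁}[exp (α C_E)]`, valued in `ℝ≥0∞`. -/
def expC (G : SimpleGraph V) [DecidableRel G.Adj] (δ : ℝ) (v₁ : V) (α : ℝ) : ℝ≥0∞ :=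
  (∑' n : ℕ, ENNReal.ofReal
      (Real.exp (α * (n + 1)) * (probCgt G δ v₁ n - probCgt G δ v₁ (n + 1)))) +
    (if 0 < α then (⊤ : ℝ≥0∞) else if α = 0 then 1 else 0) *
      ENNReal.ofReal (⨅ n : ℕ, probCgt G δ v₁ n)

/-- The critical exponent `α_c(δ)` attached to a family `𝒮₀` of edge sets. -/
def alphaC (G : SimpleGraph V) [DecidableRel G.Adj] (δ : ℝ)
    (S0 : Set (Finset (Sym2 V))) : EReal :=
  sInf { c : EReal | ∃ (ν : ProbMeas V) (F : Finset (Sym2 V)) (q : V → V → ℝ),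
    F ∈ S0 ∧ q ∈ TE F ∧ (∀ x, ν.1 x ≠ 0 → memVerts F x) ∧ Invariant ν.1 q ∧
    c = relEntInt ν.1 q (phat G δ F) }

/-- `α_c^1(δ)`: the critical exponent for the cover time. -/
def alphaC1 (G : SimpleGraph V) [DecidableRel G.Adj] (v₁ : V) (δ : ℝ) : EReal :=
  alphaC G δ (scrS G v₁ \ {G.edgeFinset})

end Graph

section Lifted

variable {V : Type} [Fintype V] [LinearOrder V]

/-- Smaller endpoint of an unordered pair. -/
def sym2lo (e : Sym2 V) : V := Sym2.lift ⟨fun a b => min a b, fun a b => min_comm a b⟩ e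

/-- Larger endpoint of an unordered pair. -/
def sym2hi (e : Sym2 V) : V := Sym2.lift ⟨fun a b => max a b, fun a b => max_comm a b⟩ e

/-- `V_S = E × {-1, 1}`: vertex set of the lifted directed graph `S`
(`true` plays the role of `+1`). -/
abbrev VSet (G : SimpleGraph V) [DecidableRel G.Adj] : Type :=
  {e : Sym2 V // e ∈ G.edgeFinset} × Bool

/-- Tail `z⁻` of an oriented edge. -/
def zm (G : SimpleGraph V) [DecidableRel G.Adj] (z : VSet G) : V :=
  if z.2 then sym2lo z.1.1 else sym2hi z.1.1

/-- Head `z⁺` of an oriented edge. -/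
def zp (G : SimpleGraph V) [DecidableRel G.Adj] (z : VSet G) : V :=
  if z.2 then sym2hi z.1.1 else sym2lo z.1.1

/-- The kernel `p_F` on the lifted directed graph `S`. -/
def pS (G : SimpleGraph V) [DecidableRel G.Adj] (δ : ℝ) (F : Finset (Sym2 V))
    (z₁ z₂ : VSet G) : ℝ :=
  if zp G z₁ = zm G z₂ then
    gw δ F z₂.1.1 / ∑ w : VSet G, (if zp G z₁ = zm G w then gw δ F w.1.1 else 0)
  else 0

/-- `𝒯_S`: stochastic matrices on `V_S` moving along orientations. -/
def TS (G : SimpleGraph V) [DecidableRel G.Adj] : Set (VSet G → VSet G → ℝ) :=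
  {q | (∀ z w, 0 ≤ q z w) ∧ (∀ z, ∑ w, q z w = 1) ∧ ∀ z w, q z w ≠ 0 → zp G z = zm G w}

/-- `𝒞(𝒮₀)`: probability measures on `V_S` whose first marginal is supported in
some member of `𝒮₀`. -/
def CC (G : SimpleGraph V) [DecidableRel G.Adj] (S0 : Set (Finset (Sym2 V))) :
    Set (ProbMeas (VSet G)) :=
  {μ | ∃ F ∈ S0, ∀ z : VSet G, μ.1 z ≠ 0 → z.1.1 ∈ F}

/-- `Λ_{δ,𝒮₀}`. -/
def Lam (G : SimpleGraph V) [DecidableRel G.Adj] (v₁ : V) (δ : ℝ)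
    (S0 : Set (Finset (Sym2 V))) (μ : ProbMeas (VSet G)) : EReal :=
  sInf { c : EReal |
    ∃ (μs : Fin G.edgeFinset.card → ProbMeas (VSet G)) (r : Fin G.edgeFinset.card → ℝ)
      (Es : Fin G.edgeFinset.card → Finset (Sym2 V))
      (qs : Fin G.edgeFinset.card → VSet G → VSet G → ℝ),
      Es ∈ seqE G v₁ ∧ (∀ k, 0 ≤ r k) ∧ (∀ k, Es k ∉ S0 → r k = 0) ∧ (∑ k, r k = 1) ∧
      (∀ k z, (μs k).1 z ≠ 0 → z.1.1 ∈ Es k) ∧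
      (∀ z, ∑ k, r k * (μs k).1 z = μ.1 z) ∧
      (∀ k, qs k ∈ TS G) ∧ (∀ k, Invariant (μs k).1 (qs k)) ∧
      c = ∑ k, ((r k : ℝ) : EReal) * relEntInt (μs k).1 (qs k) (pS G δ (Es k)) }

/-- `Λ^z_{δ,𝒮₀}`. -/
def LamZ (G : SimpleGraph V) [DecidableRel G.Adj] (v₁ : V) (δ : ℝ)
    (S0 : Set (Finset (Sym2 V))) (z : VSet G) (μ : ProbMeas (VSet G)) : EReal :=
  sInf { c : EReal |
    ∃ (μs : Fin G.edgeFinset.card → ProbMeas (VSet G)) (r : Fin G.edgeFinset.card → ℝ)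
      (Es : Fin G.edgeFinset.card → Finset (Sym2 V))
      (qs : Fin G.edgeFinset.card → VSet G → VSet G → ℝ),
      Es ∈ seqE G v₁ ∧ (∀ k : Fin G.edgeFinset.card, (k : ℕ) = 0 → Es k = {z.1.1}) ∧
      (∀ k, 0 ≤ r k) ∧ (∀ k, Es k ∉ S0 → r k = 0) ∧ (∑ k, r k = 1) ∧
      (∀ k w, (μs k).1 w ≠ 0 → w.1.1 ∈ Es k) ∧
      (∀ w, ∑ k, r k * (μs k).1 w = μ.1 w) ∧
      (∀ k, qs k ∈ TS G) ∧ (∀ k, Invariant (μs k).1 (qs k)) ∧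
      c = ∑ k, ((r k : ℝ) : EReal) * relEntInt (μs k).1 (qs k) (pS G δ (Es k)) }

/-- `Λ₁`: the Donsker–Varadhan functional for the simple random walk on `S`
(whose kernel is `pS` with `δ = 1`). -/
def Lam1 (G : SimpleGraph V) [DecidableRel G.Adj] (μ : ProbMeas (VSet G)) : EReal :=
  sInf { c : EReal | ∃ q ∈ TS G, Invariant μ.1 q ∧ c = relEntInt μ.1 q (pS G 1 ∅) }

/-- Boundary `∂F` of an edge set: edges of `F` adjacent to some edge outside `F`. -/
def bdry (G : SimpleGraph V) [DecidableRel G.Adj] (F : Finset (Sym2 V)) : Finset (Sym2 V) :=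
  F.filter fun e => ∃ e' ∈ G.edgeFinset \ F, edgeAdj e e'

/-- Out-degree `d(z)` of `z` in `S`. -/
def outDeg (G : SimpleGraph V) [DecidableRel G.Adj] (z : VSet G) : ℕ :=
  (Finset.univ.filter (fun w : VSet G => zp G z = zm G w)).card

/-- Number `k(z)` of out-neighbours of `z` lying in `F × {-1, 1}`. -/
def outDegIn (G : SimpleGraph V) [DecidableRel G.Adj] (F : Finset (Sym2 V))
    (z : VSet G) : ℕ :=
  (Finset.univ.filter (fun w : VSet G => zp G z = zm G w ∧ w.1.1 ∈ F)).card

/-- The law of `(Z_0, …, Z_n)` for the lifted `δ`-ORRW conditioned on `Z_0 = z`. -/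
def liftTraj (G : SimpleGraph V) [DecidableRel G.Adj] (δ : ℝ) (z : VSet G) (n : ℕ)
    (g : Fin (n + 1) → VSet G) : ℝ :=
  if g 0 = z then
    ∏ i : Fin n,
      pS G δ ((Finset.Iic i.castSucc).image (fun j => (g j).1.1))
        (g i.castSucc) (g i.succ)
  else 0

/-- The restricted logarithmic Laplace functional `W^{n+1}_{𝒮₀}(z)`. -/
def Wres (G : SimpleGraph V) [DecidableRel G.Adj] (δ : ℝ) (z : VSet G)
    (S0 : Set (Finset (Sym2 V))) (h : ProbMeas (VSet G) → ℝ) (n : ℕ) : EReal :=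
  if 0 < ∑ g : Fin (n + 1) → VSet G,
      (if empMeas n g ∈ CC G S0 then liftTraj G δ z n g else 0) then
    ((-((((n : ℝ) + 1))⁻¹ * Real.log (∑ g : Fin (n + 1) → VSet G,
      if empMeas n g ∈ CC G S0 then
        Real.exp (-((n : ℝ) + 1) * h (empMeas n g)) * liftTraj G δ z n g
      else 0)) : ℝ) : EReal)
  else (⊤ : EReal)

end Lifted

/-!
Let `q ∈ 𝒯(F)` with `F ≠ E`. At a vertex with an edge outside `F`, the kernel `p̂_F` gives mass
`O(δ)` to the edges of `F`, so the relative entropy there is at least `-log δ - O(1)`; at every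
other vertex `p̂_F` is the simple random walk, and the relative entropy is bounded uniformly in `δ`.

If any two edges of `G` meet, then every edge has an endpoint incident to a given missing edge. The
chain spends at least half of its time at such endpoints, and `α_c^1(δ) → ∞`. If instead two
disjoint edges exist, choose a non-cut vertex `w ≠ v₁`: some edge `wu` is disjoint from some edge
`ab`, since edges that meet all edges at `w` meet each other. Removing `wu` leaves a member of `𝒮`,
and the chain oscillating between `a` and `b` has a cost independent of `δ`.

A connected graph has pairwise intersecting edges exactly when it is a star or has three vertices.
-/

section RelativeEntropy

lemma neg_log_sum_le_sum_mul_log_div {A : Type*} {s : Finset A} {γ ρ : A → ℝ}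
    (hγ : ∀ a ∈ s, 0 < γ a) (hρ : ∀ a ∈ s, 0 < ρ a) (hsum : ∑ a ∈ s, γ a = 1) :
    -Real.log (∑ a ∈ s, ρ a) ≤ ∑ a ∈ s, γ a * Real.log (γ a / ρ a) := by
  have jensen := strictConcaveOn_log_Ioi.concaveOn.le_map_sum (p := fun a => ρ a / γ a)
    (fun a ha => (hγ a ha).le) hsum fun a ha => div_pos (hρ a ha) (hγ a ha)
  simp only [smul_eq_mul] at jensen
  rw [Finset.sum_congr rfl fun a ha => mul_div_cancel₀ _ (hγ a ha).ne'] at jensen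
  calc -Real.log (∑ a ∈ s, ρ a) ≤ -∑ a ∈ s, γ a * Real.log (ρ a / γ a) := neg_le_neg jensen
    _ = ∑ a ∈ s, γ a * Real.log (γ a / ρ a) := by
      simp only [← Finset.sum_neg_distrib, ← mul_neg, ← Real.log_inv, inv_div]

lemma coe_sum_ereal {A : Type*} (s : Finset A) (f : A → ℝ) :
    ((∑ a ∈ s, f a : ℝ) : EReal) = ∑ a ∈ s, (f a : EReal) :=
  map_sum (⟨⟨Real.toEReal, EReal.coe_zero⟩, EReal.coe_add⟩ : ℝ →+ EReal) f s

variable {A : Type} [Fintype A] {γ ρ ρ' : A → ℝ}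

lemma neg_log_le_relEnt (hγ : 0 ≤ γ) (hsum : ∑ a, γ a = 1) (hρ : 0 ≤ ρ) {M : ℝ}
    (hM : ∑ a with γ a ≠ 0, ρ a ≤ M) : ((-Real.log M : ℝ) : EReal) ≤ relEnt γ ρ := by
  unfold relEnt
  split_ifs with hac
  swap
  · exact le_top
  have hγ_pos : ∀ a ∈ ({a | γ a ≠ 0} : Finset A), 0 < γ a := fun a ha =>
    (hγ a).lt_of_ne' (Finset.mem_filter.1 ha).2
  have hρ_pos : ∀ a ∈ ({a | γ a ≠ 0} : Finset A), 0 < ρ a := fun a ha =>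
    (hρ a).lt_of_ne' (mt (hac a) (Finset.mem_filter.1 ha).2)
  have hsum_supp : ∑ a with γ a ≠ 0, γ a = 1 := by rw [Finset.sum_filter_ne_zero, hsum]
  have hmass_pos : 0 < ∑ a with γ a ≠ 0, ρ a :=
    Finset.sum_pos hρ_pos (Finset.nonempty_of_sum_ne_zero (hsum_supp ▸ one_ne_zero))
  rw [EReal.coe_le_coe_iff]
  calc -Real.log M ≤ -Real.log (∑ a with γ a ≠ 0, ρ a) :=
        neg_le_neg (Real.log_le_log hmass_pos hM)
    _ ≤ ∑ a with γ a ≠ 0, γ a * Real.log (γ a / ρ a) :=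
        neg_log_sum_le_sum_mul_log_div hγ_pos hρ_pos hsum_supp
    _ = ∑ a, γ a * Real.log (γ a / ρ a) :=
        Finset.sum_filter_of_ne fun a _ => left_ne_zero_of_mul

lemma relEnt_nonneg (hγ : 0 ≤ γ) (hsum : ∑ a, γ a = 1) (hρ : 0 ≤ ρ) (hρ_sum : ∑ a, ρ a ≤ 1) :
    0 ≤ relEnt γ ρ := by
  have hM : ∑ a with γ a ≠ 0, ρ a ≤ 1 :=
    (Finset.sum_le_univ_sum_of_nonneg hρ).trans hρ_sum
  simpa using neg_log_le_relEnt hγ hsum hρ hM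

lemma relEnt_anti_right (hγ : 0 ≤ γ) (hρ : 0 ≤ ρ) (h : ∀ a, γ a ≠ 0 → ρ a ≤ ρ' a) :
    relEnt γ ρ' ≤ relEnt γ ρ := by
  by_cases hac : ∀ a, ρ a = 0 → γ a = 0
  swap
  · simp only [relEnt, if_neg hac, le_top]
  have hρ_pos : ∀ a, γ a ≠ 0 → 0 < ρ a := fun a ha => (hρ a).lt_of_ne' (mt (hac a) ha)
  have hac' : ∀ a, ρ' a = 0 → γ a = 0 := fun a ha => by
    by_contra hγa
    exact ((hρ_pos a hγa).trans_le (h a hγa)).ne' ha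
  rw [relEnt, relEnt, if_pos hac, if_pos hac', EReal.coe_le_coe_iff]
  refine Finset.sum_le_sum fun a _ => ?_
  by_cases hγa : γ a = 0
  · simp [hγa]
  have hγ_pos : 0 < γ a := (hγ a).lt_of_ne' hγa
  have hρa := hρ_pos a hγa
  have hρ'a := hρa.trans_le (h a hγa)
  gcongr
  exact h a hγa

lemma relEnt_single [DecidableEq A] {a : A} (ha : ρ a ≠ 0) :
    relEnt (Pi.single a 1) ρ = ((-Real.log (ρ a) : ℝ) : EReal) := by
  have hac : ∀ x, ρ x = 0 → (Pi.single a 1 : A → ℝ) x = 0 := fun x hx =>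
    Pi.single_eq_of_ne (by rintro rfl; exact ha hx) 1
  rw [relEnt, if_pos hac]
  simp [Pi.single_apply, ite_mul]

variable {ν f : A → ℝ} {q p : A → A → ℝ}

lemma relEntInt_le_relEntInt {p' : A → A → ℝ} (hν : 0 ≤ ν)
    (h : ∀ a, ν a ≠ 0 → relEnt (q a) (p a) ≤ relEnt (q a) (p' a)) :
    relEntInt ν q p ≤ relEntInt ν q p' := by
  refine Finset.sum_le_sum fun a _ => ?_
  by_cases ha : ν a = 0
  · simp [ha]
  · exact mul_le_mul_of_nonneg_left (h a ha) (EReal.coe_nonneg.2 (hν a))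

lemma coe_sum_le_relEntInt (hν : 0 ≤ ν) (h : ∀ a, ν a ≠ 0 → (f a : EReal) ≤ relEnt (q a) (p a)) :
    ((∑ a, ν a * f a : ℝ) : EReal) ≤ relEntInt ν q p := by
  rw [coe_sum_ereal]
  refine Finset.sum_le_sum fun a _ => ?_
  by_cases ha : ν a = 0
  · simp [ha]
  · rw [EReal.coe_mul]
    exact mul_le_mul_of_nonneg_left (h a ha) (EReal.coe_nonneg.2 (hν a))

lemma relEntInt_eq_coe_sum (h : ∀ a, ν a ≠ 0 → relEnt (q a) (p a) = (f a : EReal)) :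
    relEntInt ν q p = ((∑ a, ν a * f a : ℝ) : EReal) := by
  rw [coe_sum_ereal]
  refine Finset.sum_congr rfl fun a _ => ?_
  by_cases ha : ν a = 0
  · simp [ha]
  · rw [h a ha, EReal.coe_mul]

end RelativeEntropy

section InvariantMeasure

variable {A : Type} [Fintype A]

lemma Invariant.sum_compl_le_sum {ν : A → ℝ} {q : A → A → ℝ} (hinv : Invariant ν q)
    (hν : 0 ≤ ν) (hq : ∀ x y, 0 ≤ q x y) (hrow : ∀ x, ν x ≠ 0 → ∑ y, q x y = 1) {B : Finset A}
    (hB : ∀ x ∉ B, ∀ y ∉ B, q x y = 0) : ∑ y ∈ Bᶜ, ν y ≤ ∑ x ∈ B, ν x := by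
  have hflow : ∀ x ∉ B, ν x * ∑ y ∈ Bᶜ, q x y = 0 := fun x hx => by
    rw [Finset.sum_eq_zero fun y hy => hB x hx y (Finset.mem_compl.1 hy), mul_zero]
  calc ∑ y ∈ Bᶜ, ν y
      = ∑ y ∈ Bᶜ, ∑ x, ν x * q x y := Finset.sum_congr rfl fun y _ => (hinv y).symm
    _ = ∑ x, ν x * ∑ y ∈ Bᶜ, q x y := by rw [Finset.sum_comm]; simp only [Finset.mul_sum]
    _ = ∑ x ∈ B, ν x * ∑ y ∈ Bᶜ, q x y :=
        (Finset.sum_subset B.subset_univ fun x _ hx => hflow x hx).symm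
    _ ≤ ∑ x ∈ B, ν x := Finset.sum_le_sum fun x _ => by
        by_cases hx : ν x = 0
        · simp [hx]
        · exact mul_le_of_le_one_right (hν x)
            (hrow x hx ▸ Finset.sum_le_univ_sum_of_nonneg (hq x))

variable [DecidableEq A]

/-- The uniform probability measure on `{a, b}`; it is the Dirac mass at `a` when `a = b`. -/
def pairMeas (a b : A) : ProbMeas A :=
  ⟨fun x => ((Pi.single a 1 : A → ℝ) x + (Pi.single b 1 : A → ℝ) x) / 2,
    fun x => by simp only [Pi.single_apply]; positivity,
    by rw [← Finset.sum_div, Finset.sum_add_distrib]; simp⟩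

lemma sum_pairMeas_mul (a b : A) (f : A → ℝ) :
    ∑ x, (pairMeas a b).1 x * f x = (f a + f b) / 2 := by
  simp [pairMeas, Pi.single_apply, div_mul_eq_mul_div, add_mul, ← Finset.sum_div,
    Finset.sum_add_distrib]

lemma eq_or_eq_of_pairMeas_ne_zero {a b x : A} (hx : (pairMeas a b).1 x ≠ 0) : x = a ∨ x = b := by
  contrapose! hx
  simp [pairMeas, hx.1, hx.2]

lemma invariant_pairMeas {a b : A} {q : A → A → ℝ} (ha : q a = Pi.single b 1)
    (hb : q b = Pi.single a 1) : Invariant (pairMeas a b).1 q := fun y => by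
  rw [sum_pairMeas_mul a b fun x => q x y, ha, hb, pairMeas, add_comm]

end InvariantMeasure

section Kernel

variable {V : Type}

lemma gw_pos [DecidableEq V] {δ : ℝ} (hδ : 0 < δ) (F : Finset (Sym2 V)) (e : Sym2 V) :
    0 < gw δ F e := by
  unfold gw
  split_ifs
  exacts [hδ, one_pos]

variable [Fintype V]

/-- The vertices incident to an edge of `G` outside `F`, from which the walk can leave `F`. -/
def exitVerts (G : SimpleGraph V) (F : Finset (Sym2 V)) : Finset V :=
  {x | ∃ z, G.Adj x z ∧ s(x, z) ∉ F}

lemma mem_exitVerts {G : SimpleGraph V} {F : Finset (Sym2 V)} {x : V} :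
    x ∈ exitVerts G F ↔ ∃ z, G.Adj x z ∧ s(x, z) ∉ F := by
  simp [exitVerts]

lemma mem_of_notMem_exitVerts {G : SimpleGraph V} {F : Finset (Sym2 V)} {x y : V}
    (hx : x ∉ exitVerts G F) (hxy : G.Adj x y) : s(x, y) ∈ F := by
  by_contra hF
  exact hx (mem_exitVerts.2 ⟨y, hxy, hF⟩)

variable [DecidableEq V] (G : SimpleGraph V) [DecidableRel G.Adj] {δ δ' : ℝ}
  (F : Finset (Sym2 V)) {x y : V}

lemma sum_gw_pos (hδ : 0 < δ) (hxy : G.Adj x y) :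
    0 < ∑ z ∈ G.neighborFinset x, gw δ F s(x, z) :=
  Finset.sum_pos (fun _ _ => gw_pos hδ F _) ⟨y, (G.mem_neighborFinset x y).2 hxy⟩

lemma phat_nonneg (hδ : 0 < δ) (x y : V) : 0 ≤ phat G δ F x y := by
  unfold phat
  split_ifs with hxy
  · exact (div_pos (gw_pos hδ F _) (sum_gw_pos G F hδ hxy)).le
  · exact le_rfl

lemma sum_phat_le_one (δ : ℝ) (x : V) : ∑ y, phat G δ F x y ≤ 1 := by
  simp only [phat]
  rw [← Finset.sum_filter, ← SimpleGraph.neighborFinset_eq_filter, ← Finset.sum_div]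
  exact div_self_le_one _

variable {G F}

lemma phat_mono (hδ : 0 < δ) (h : δ ≤ δ') (hF : s(x, y) ∈ F) :
    phat G δ F x y ≤ phat G δ' F x y := by
  by_cases hxy : G.Adj x y
  swap
  · simp [phat, hxy]
  have hδ' : 0 < δ' := hδ.trans_le h
  rw [phat, phat, if_pos hxy, if_pos hxy,
    div_le_div_iff₀ (sum_gw_pos G F hδ hxy) (sum_gw_pos G F hδ' hxy), Finset.mul_sum,
    Finset.mul_sum]
  refine Finset.sum_le_sum fun z _ => ?_
  simp only [gw, if_pos hF]
  split_ifs
  · exact (mul_comm δ δ').le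
  · simpa only [mul_one] using h

lemma phat_le_of_mem_exitVerts (hδ : 0 < δ) (hx : x ∈ exitVerts G F) (hF : s(x, y) ∈ F) :
    phat G δ F x y ≤ δ := by
  by_cases hxy : G.Adj x y
  swap
  · simpa [phat, hxy] using hδ.le
  obtain ⟨z, hxz, hzF⟩ := mem_exitVerts.1 hx
  have hden : 1 ≤ ∑ z ∈ G.neighborFinset x, gw δ F s(x, z) := by
    simpa only [gw, if_neg hzF] using Finset.single_le_sum (f := fun z => gw δ F s(x, z))
      (fun z _ => (gw_pos hδ F _).le) ((G.mem_neighborFinset x z).2 hxz)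
  rw [phat, if_pos hxy, gw, if_pos hF]
  exact div_le_self hδ.le hden

lemma phat_eq_inv_degree (hδ : 0 < δ) (hx : x ∉ exitVerts G F) (hxy : G.Adj x y) :
    phat G δ F x y = (G.degree x : ℝ)⁻¹ := by
  have hgw : ∀ z, G.Adj x z → gw δ F s(x, z) = δ := fun z hz =>
    if_pos (mem_of_notMem_exitVerts hx hz)
  have hden : ∑ z ∈ G.neighborFinset x, gw δ F s(x, z) = G.degree x * δ := by
    rw [Finset.sum_congr rfl fun z hz => hgw z ((G.mem_neighborFinset x z).1 hz),
      Finset.sum_const, SimpleGraph.card_neighborFinset_eq_degree, nsmul_eq_mul]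
  rw [phat, if_pos hxy, hgw y hxy, hden, div_mul_cancel_right₀ hδ.ne']

variable {q : V → V → ℝ}

lemma relEnt_phat_nonneg (hδ : 0 < δ) (hq : q ∈ TE F) (hx : memVerts F x) :
    0 ≤ relEnt (q x) (phat G δ F x) :=
  relEnt_nonneg (hq.1 x) (hq.2.1 x hx) (phat_nonneg G F hδ x) (sum_phat_le_one G F δ x)

lemma relEnt_phat_anti (hδ : 0 < δ) (h : δ ≤ δ') (hq : q ∈ TE F) (x : V) :
    relEnt (q x) (phat G δ' F x) ≤ relEnt (q x) (phat G δ F x) :=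
  relEnt_anti_right (hq.1 x) (phat_nonneg G F hδ x) fun y hy => phat_mono hδ h (hq.2.2 x y hy)

lemma neg_log_le_relEnt_phat (hδ : 0 < δ) (hq : q ∈ TE F) (hx : memVerts F x)
    (hexit : x ∈ exitVerts G F) :
    ((-Real.log (Fintype.card V * δ) : ℝ) : EReal) ≤ relEnt (q x) (phat G δ F x) := by
  refine neg_log_le_relEnt (hq.1 x) (hq.2.1 x hx) (phat_nonneg G F hδ x) ?_
  calc ∑ y with q x y ≠ 0, phat G δ F x y
      ≤ ∑ y with q x y ≠ 0, δ := Finset.sum_le_sum fun y hy =>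
        phat_le_of_mem_exitVerts hδ hexit (hq.2.2 x y (Finset.mem_filter.1 hy).2)
    _ ≤ ∑ _y : V, δ := Finset.sum_le_univ_sum_of_nonneg fun _ => hδ.le
    _ = Fintype.card V * δ := by simp

end Kernel

section CriticalExponent

variable {V : Type} [Fintype V] [DecidableEq V] {G : SimpleGraph V} [DecidableRel G.Adj]
  {S0 : Set (Finset (Sym2 V))}

lemma alphaC_nonneg {δ : ℝ} (hδ : 0 < δ) : 0 ≤ alphaC G δ S0 := by
  refine le_sInf ?_
  rintro _ ⟨ν, F, q, -, hq, hν, -, rfl⟩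
  refine Finset.sum_nonneg fun x _ => ?_
  by_cases hx : ν.1 x = 0
  · simp [hx]
  · exact mul_nonneg (EReal.coe_nonneg.2 (ν.2.1 x)) (relEnt_phat_nonneg hδ hq (hν x hx))

lemma alphaC_antitoneOn : AntitoneOn (fun δ => alphaC G δ S0) (Set.Ioi 0) := by
  intro δ hδ δ' _ h
  refine le_sInf ?_
  rintro _ ⟨ν, F, q, hF, hq, hν, hinv, rfl⟩
  exact sInf_le_of_le ⟨ν, F, q, hF, hq, hν, hinv, rfl⟩
    (relEntInt_le_relEntInt ν.2.1 fun x _ => relEnt_phat_anti hδ h hq x)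

lemma exists_tendsto_alphaC_of_le {M : ℝ} (hM : ∀ δ, 0 < δ → alphaC G δ S0 ≤ M) :
    ∃ L : ℝ, Tendsto (fun δ => alphaC G δ S0) (𝓝[>] 0) (𝓝 (L : EReal)) := by
  have hlim := (alphaC_antitoneOn (G := G) (S0 := S0)).tendsto_nhdsGT (OrderTop.bddAbove _)
  have hsup_le : sSup ((fun δ => alphaC G δ S0) '' Set.Ioi 0) ≤ M :=
    sSup_le (Set.forall_mem_image.2 hM)
  have hsup_nonneg : 0 ≤ sSup ((fun δ => alphaC G δ S0) '' Set.Ioi 0) :=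
    (alphaC_nonneg one_pos).trans (le_sSup ⟨1, Set.mem_Ioi.2 one_pos, rfl⟩)
  lift sSup ((fun δ => alphaC G δ S0) '' Set.Ioi 0) to ℝ using
    ⟨ne_top_of_le_ne_top (EReal.coe_ne_top M) hsup_le,
      ne_bot_of_le_ne_bot EReal.zero_ne_bot hsup_nonneg⟩ with L
  exact ⟨L, hlim⟩

end CriticalExponent

section IntersectingEdges

lemma eq_starGraph_iff {V : Type*} {G : SimpleGraph V} {c : V} :
    G = SimpleGraph.starGraph c ↔
      (∀ v, v ≠ c → G.Adj c v) ∧ ∀ u v, G.Adj u v → u = c ∨ v = c := by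
  constructor
  · rintro rfl
    exact ⟨fun v hv => SimpleGraph.starGraph_center_adj hv.symm,
      fun u v huv => (SimpleGraph.starGraph_adj.1 huv).2⟩
  · rintro ⟨hcenter, hedge⟩
    ext u v
    rw [SimpleGraph.starGraph_adj]
    refine ⟨fun huv => ⟨huv.ne, hedge u v huv⟩, ?_⟩
    rintro ⟨huv, rfl | rfl⟩
    exacts [hcenter v huv.symm, (hcenter u huv).symm]

lemma eq_starGraph_of_forall_mem {V : Type*} {G : SimpleGraph V} (hG : G.Connected)
    {c : V} (hc : ∀ e ∈ G.edgeSet, c ∈ e) : G = SimpleGraph.starGraph c := by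
  have hedge : ∀ u v, G.Adj u v → u = c ∨ v = c := fun u v huv => by
    simpa only [Sym2.mem_iff, eq_comm] using hc s(u, v) huv
  refine eq_starGraph_iff.2 ⟨fun v hv => ?_, hedge⟩
  have : Nontrivial V := ⟨v, c, hv⟩
  obtain ⟨u, hvu⟩ := hG.preconnected.exists_adj_of_nontrivial v
  obtain rfl := (hedge v u hvu).resolve_left hv
  exact hvu.symm

variable {V : Type}

/-- Any two edges of `G` share a vertex. -/
def EdgesMeet (G : SimpleGraph V) : Prop :=
  ∀ e ∈ G.edgeSet, ∀ e' ∈ G.edgeSet, edgeAdj e e'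

lemma edgeAdj_mk {e : Sym2 V} {a b : V} : edgeAdj s(a, b) e ↔ a ∈ e ∨ b ∈ e := by
  simp [edgeAdj]

lemma edgesMeet_of_forall_edgeAdj {G : SimpleGraph V} {w u : V} (hwu : G.Adj w u)
    (h : ∀ z, G.Adj w z → ∀ e ∈ G.edgeSet, edgeAdj s(w, z) e) : EdgesMeet G := by
  intro e he e' he'
  by_cases hwe : w ∈ e
  · obtain ⟨z, rfl⟩ := Sym2.mem_iff_exists.1 hwe
    exact h z he e' he'
  by_cases hwe' : w ∈ e'
  · obtain ⟨z, rfl⟩ := Sym2.mem_iff_exists.1 hwe'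
    obtain ⟨v, hv, hve⟩ := h z he' e he
    exact ⟨v, hve, hv⟩
  · exact ⟨u, (edgeAdj_mk.1 (h u hwu e he)).resolve_left hwe,
      (edgeAdj_mk.1 (h u hwu e' he')).resolve_left hwe'⟩

lemma edgesMeet_starGraph (c : V) : EdgesMeet (SimpleGraph.starGraph c) := by
  have hc : ∀ e ∈ (SimpleGraph.starGraph c).edgeSet, c ∈ e := by
    rintro ⟨u, v⟩ huv
    simpa only [Sym2.mem_iff, eq_comm] using (SimpleGraph.starGraph_adj.1 huv).2
  exact fun e he e' he' => ⟨c, hc e he, hc e' he'⟩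

lemma exists_triangle_of_edgesMeet [Nonempty V] {G : SimpleGraph V} (hmeet : EdgesMeet G)
    (hcenter : ∀ c, ∃ e ∈ G.edgeSet, c ∉ e) :
    ∃ a b c, G.Adj a b ∧ G.Adj b c ∧ G.Adj a c := by
  obtain ⟨⟨a, b⟩, hab, -⟩ := hcenter (Classical.arbitrary V)
  obtain ⟨e, he, hae⟩ := hcenter a
  obtain ⟨e', he', hbe'⟩ := hcenter b
  obtain ⟨c, rfl⟩ := Sym2.mem_iff_exists.1 ((edgeAdj_mk.1 (hmeet _ hab e he)).resolve_left hae)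
  obtain ⟨d, rfl⟩ :=
    Sym2.mem_iff_exists.1 ((edgeAdj_mk.1 (hmeet _ hab e' he')).resolve_right hbe')
  have hcd : c = d := by
    have := edgeAdj_mk.1 (hmeet _ he _ he')
    simp only [Sym2.mem_iff] at hae hbe' this
    grind
  subst hcd
  exact ⟨a, b, c, hab, he, he'⟩

variable [Fintype V]

lemma edgesMeet_of_card_eq_three {G : SimpleGraph V} (hcard : Fintype.card V = 3) :
    EdgesMeet G := by
  rintro ⟨a, b⟩ hab ⟨u, v⟩ huv
  by_contra hdisj
  have hfour : ({a, b, u, v} : Finset V).card = 4 := by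
    have := G.ne_of_adj hab
    have := G.ne_of_adj huv
    simp only [edgeAdj_mk, Sym2.mem_iff] at hdisj
    grind
  have := Finset.card_le_univ ({a, b, u, v} : Finset V)
  omega

lemma card_eq_three_of_triangle {G : SimpleGraph V} (hG : G.Connected) (hmeet : EdgesMeet G)
    {a b c : V} (hab : G.Adj a b) (hbc : G.Adj b c) (hac : G.Adj a c) :
    Fintype.card V = 3 := by
  have : Nontrivial V := ⟨a, b, hab.ne⟩
  have huniv : (Finset.univ : Finset V) = {a, b, c} := by
    refine (Finset.eq_univ_of_forall fun x => ?_).symm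
    obtain ⟨y, hxy⟩ := hG.preconnected.exists_adj_of_nontrivial x
    have h₁ := edgeAdj_mk.1 (hmeet s(a, b) hab s(x, y) hxy)
    have h₂ := edgeAdj_mk.1 (hmeet s(b, c) hbc s(x, y) hxy)
    have h₃ := edgeAdj_mk.1 (hmeet s(a, c) hac s(x, y) hxy)
    simp only [Sym2.mem_iff] at h₁ h₂ h₃
    simp only [Finset.mem_insert, Finset.mem_singleton]
    grind [hab.ne, hbc.ne, hac.ne]
  rw [← Finset.card_univ, huniv, Finset.card_eq_three]
  exact ⟨a, b, c, hab.ne, hac.ne, hbc.ne, rfl⟩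

lemma edgesMeet_iff {G : SimpleGraph V} (hG : G.Connected) :
    EdgesMeet G ↔ Fintype.card V = 3 ∨ ∃ c, G = SimpleGraph.starGraph c := by
  constructor
  · intro hmeet
    refine or_iff_not_imp_right.2 fun hstar => ?_
    have hcenter : ∀ c, ∃ e ∈ G.edgeSet, c ∉ e := fun c => by
      by_contra! hc
      exact hstar ⟨c, eq_starGraph_of_forall_mem hG hc⟩
    have := hG.nonempty
    obtain ⟨a, b, c, hab, hbc, hac⟩ := exists_triangle_of_edgesMeet hmeet hcenter
    exact card_eq_three_of_triangle hG hmeet hab hbc hac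
  · rintro (hcard | ⟨c, rfl⟩)
    exacts [edgesMeet_of_card_eq_three hcard, edgesMeet_starGraph c]

lemma mem_exitVerts_or_mem_exitVerts {G : SimpleGraph V} [DecidableRel G.Adj]
    (hmeet : EdgesMeet G) {F : Finset (Sym2 V)} (hF : ¬ G.edgeFinset ⊆ F) {x y : V}
    (hxy : G.Adj x y) : x ∈ exitVerts G F ∨ y ∈ exitVerts G F := by
  obtain ⟨e, he, heF⟩ := Finset.not_subset.1 hF
  rw [SimpleGraph.mem_edgeFinset] at he
  have hexit : ∀ v ∈ e, v ∈ exitVerts G F := fun v hv => by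
    obtain ⟨z, rfl⟩ := Sym2.mem_iff_exists.1 hv
    exact mem_exitVerts.2 ⟨z, he, heF⟩
  exact (edgeAdj_mk.1 (hmeet s(x, y) hxy e he)).imp (hexit x) (hexit y)

end IntersectingEdges

section LowerBound

variable {V : Type} [Fintype V] {G : SimpleGraph V} [DecidableRel G.Adj]

lemma half_le_sum_exitVerts (hmeet : EdgesMeet G) {F : Finset (Sym2 V)} (hF : F ⊂ G.edgeFinset)
    {q : V → V → ℝ} (hq : q ∈ TE F) {ν : ProbMeas V} (hν : ∀ x, ν.1 x ≠ 0 → memVerts F x)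
    (hinv : Invariant ν.1 q) : 1 / 2 ≤ ∑ x ∈ exitVerts G F, ν.1 x := by
  have hno_step : ∀ x ∉ exitVerts G F, ∀ y ∉ exitVerts G F, q x y = 0 := by
    intro x hx y hy
    by_contra hxy
    have hadj : G.Adj x y := SimpleGraph.mem_edgeFinset.1 (hF.1 (hq.2.2 x y hxy))
    exact (mem_exitVerts_or_mem_exitVerts hmeet hF.2 hadj).elim hx hy
  have hcompl := hinv.sum_compl_le_sum ν.2.1 hq.1 (fun x hx => hq.2.1 x (hν x hx)) hno_step
  have htotal := Finset.sum_add_sum_compl (exitVerts G F) ν.1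
  rw [ν.2.2] at htotal
  linarith

variable [DecidableEq V] {S0 : Set (Finset (Sym2 V))} {δ : ℝ}

lemma neg_log_div_two_le_alphaC (hmeet : EdgesMeet G) (hS0 : ∀ F ∈ S0, F ⊂ G.edgeFinset)
    (hδ : 0 < δ) (hδ_le : Fintype.card V * δ ≤ 1) :
    ((-Real.log (Fintype.card V * δ) / 2 : ℝ) : EReal) ≤ alphaC G δ S0 := by
  refine le_sInf ?_
  rintro _ ⟨ν, F, q, hF, hq, hν, hinv, rfl⟩
  set ℓ := -Real.log (Fintype.card V * δ)
  have hℓ_nonneg : 0 ≤ ℓ := neg_nonneg.2 (Real.log_nonpos (by positivity) hδ_le)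
  have hrow : ∀ x, ν.1 x ≠ 0 →
      ((if x ∈ exitVerts G F then ℓ else 0 : ℝ) : EReal) ≤ relEnt (q x) (phat G δ F x) := by
    intro x hx
    split_ifs with hexit
    · exact neg_log_le_relEnt_phat hδ hq (hν x hx) hexit
    · exact relEnt_phat_nonneg hδ hq (hν x hx)
  have hhalf := half_le_sum_exitVerts hmeet (hS0 F hF) hq hν hinv
  have hsum : ℓ / 2 ≤ ∑ x, ν.1 x * if x ∈ exitVerts G F then ℓ else 0 := by
    calc ℓ / 2 = 1 / 2 * ℓ := by ring
      _ ≤ (∑ x ∈ exitVerts G F, ν.1 x) * ℓ := by gcongr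
      _ = ∑ x, ν.1 x * if x ∈ exitVerts G F then ℓ else 0 := by
        simp [Finset.sum_mul]
  exact (EReal.coe_le_coe_iff.2 hsum).trans (coe_sum_le_relEntInt ν.2.1 hrow)

lemma tendsto_alphaC_nhds_top [Nonempty V] (hmeet : EdgesMeet G)
    (hS0 : ∀ F ∈ S0, F ⊂ G.edgeFinset) :
    Tendsto (fun δ => alphaC G δ S0) (𝓝[>] 0) (𝓝 ⊤) := by
  have hcard : (0 : ℝ) < Fintype.card V := Nat.cast_pos.2 Fintype.card_pos
  have hscale : Tendsto (fun δ : ℝ => Fintype.card V * δ) (𝓝[>] 0) (𝓝[>] 0) := by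
    refine tendsto_nhdsWithin_iff.2 ⟨?_, ?_⟩
    · simpa using ((continuous_const_mul (Fintype.card V : ℝ)).tendsto 0).mono_left
        nhdsWithin_le_nhds
    · exact eventually_nhdsWithin_of_forall fun δ hδ => mul_pos hcard hδ
  have hbound : Tendsto (fun δ : ℝ => -Real.log (Fintype.card V * δ) / 2) (𝓝[>] 0) atTop :=
    (tendsto_neg_atBot_atTop.comp (Real.tendsto_log_nhdsGT_zero.comp hscale)).atTop_div_const
      two_pos
  have hsmall : ∀ᶠ δ : ℝ in 𝓝[>] 0, Fintype.card V * δ ≤ 1 :=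
    (hscale.mono_right nhdsWithin_le_nhds).eventually_le_const one_pos
  refine tendsto_nhds_top_mono (EReal.tendsto_coe_nhds_top_iff.2 hbound) ?_
  filter_upwards [hsmall, self_mem_nhdsWithin] with δ hδ_le hδ
  exact neg_log_div_two_le_alphaC hmeet hS0 hδ hδ_le

end LowerBound

section UpperBound

variable {V : Type} [Fintype V] {F : Finset (Sym2 V)} {a b : V}

lemma TE_nonempty (F : Finset (Sym2 V)) : (TE F).Nonempty := by
  have hrow : ∀ x, ∃ r : V → ℝ,
      (∀ y, 0 ≤ r y) ∧ (memVerts F x → ∑ y, r y = 1) ∧ ∀ y, r y ≠ 0 → s(x, y) ∈ F := by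
    intro x
    by_cases hx : memVerts F x
    · obtain ⟨e, he, hxe⟩ := hx
      obtain ⟨z, rfl⟩ := Sym2.mem_iff_exists.1 hxe
      refine ⟨Pi.single z 1, fun y => ?_, fun _ => by simp, fun y hy => ?_⟩
      · simp only [Pi.single_apply]; positivity
      · rwa [show y = z by contrapose! hy; simp [hy]]
    · exact ⟨0, by simp, fun h => absurd h hx, by simp⟩
  choose q hnonneg hsum hsupp using hrow
  exact ⟨q, hnonneg, hsum, hsupp⟩

variable [DecidableEq V]

lemma update_mem_TE {q : V → V → ℝ} (hq : q ∈ TE F) (hab : s(a, b) ∈ F) :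
    Function.update q a (Pi.single b 1) ∈ TE F := by
  refine ⟨fun x y => ?_, fun x hx => ?_, fun x y hxy => ?_⟩ <;> by_cases hxa : x = a
  · subst hxa
    simp only [Function.update_self, Pi.single_apply]; positivity
  · simpa [hxa] using hq.1 x y
  · simp [hxa]
  · simpa [hxa] using hq.2.1 x hx
  · subst hxa
    rwa [show y = b by contrapose! hxy; simp [hxy]]
  · exact hq.2.2 x y (by simpa [hxa] using hxy)

lemma exists_mem_TE_swap (hne : a ≠ b) (hab : s(a, b) ∈ F) :
    ∃ q ∈ TE F, q a = Pi.single b 1 ∧ q b = Pi.single a 1 := by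
  obtain ⟨q, hq⟩ := TE_nonempty F
  refine ⟨_, update_mem_TE (update_mem_TE hq hab) (Sym2.eq_swap ▸ hab), ?_, ?_⟩ <;> simp [hne]

variable {G : SimpleGraph V} [DecidableRel G.Adj] {S0 : Set (Finset (Sym2 V))} {δ : ℝ}

lemma alphaC_le_log_degree (hδ : 0 < δ) (hF : F ∈ S0) (hab : G.Adj a b)
    (ha : a ∉ exitVerts G F) (hb : b ∉ exitVerts G F) :
    alphaC G δ S0 ≤ (((Real.log (G.degree a) + Real.log (G.degree b)) / 2 : ℝ) : EReal) := by
  have habF : s(a, b) ∈ F := mem_of_notMem_exitVerts ha hab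
  obtain ⟨q, hq, hqa, hqb⟩ := exists_mem_TE_swap hab.ne habF
  have hrow : ∀ x y, x ∉ exitVerts G F → G.Adj x y → q x = Pi.single y 1 →
      relEnt (q x) (phat G δ F x) = ((Real.log (G.degree x) : ℝ) : EReal) := by
    intro x y hx hxy hqx
    have hphat := phat_eq_inv_degree hδ hx hxy
    have hdeg : (G.degree x : ℝ)⁻¹ ≠ 0 :=
      inv_ne_zero (Nat.cast_ne_zero.2 (hxy.degree_pos_left).ne')
    rw [hqx, relEnt_single (hphat ▸ hdeg), hphat, Real.log_inv, neg_neg]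
  have hcost : relEntInt (pairMeas a b).1 q (phat G δ F) =
      (((Real.log (G.degree a) + Real.log (G.degree b)) / 2 : ℝ) : EReal) := by
    rw [relEntInt_eq_coe_sum (f := fun x => Real.log (G.degree x)), sum_pairMeas_mul]
    intro x hx
    obtain rfl | rfl := eq_or_eq_of_pairMeas_ne_zero hx
    exacts [hrow x b ha hab hqa, hrow x a hb hab.symm hqb]
  refine sInf_le ⟨pairMeas a b, F, q, hF, hq, fun x hx => ⟨s(a, b), habF, ?_⟩,
    invariant_pairMeas hqa hqb, hcost.symm⟩
  exact Sym2.mem_iff.2 (eq_or_eq_of_pairMeas_ne_zero hx)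

end UpperBound

section NonCutVertex

lemma exists_ne_connected_induce_compl {V : Type*} [Finite V] [Nontrivial V] {G : SimpleGraph V}
    (hG : G.Connected) (v : V) : ∃ w ≠ v, (G.induce {w}ᶜ).Connected := by
  have := Fintype.ofFinite V
  obtain ⟨T, hTG, hT⟩ := hG.exists_isTree_le
  have hleaf : ∀ w, T.degree w = 1 → (G.induce {w}ᶜ).Connected := fun w hw =>
    (hT.connected.induce_compl_singleton_of_degree_eq_one hw).mono fun _ _ hxy => hTG hxy
  obtain ⟨w, w', hne, hw, hw'⟩ := hT.exists_ne_and_degree_eq_one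
  by_cases hwv : w = v
  · exact ⟨w', fun h => hne (hwv.trans h.symm), hleaf w' hw'⟩
  · exact ⟨w, hwv, hleaf w hw⟩

variable {V : Type} [Fintype V] {G : SimpleGraph V} [DecidableRel G.Adj] {F : Finset (Sym2 V)}
  {v₁ w : V}

lemma mem_scrS_of_connected_induce_compl (hF : F ⊆ G.edgeFinset) (hv₁ : v₁ ≠ w)
    (hnt : ({w}ᶜ : Set V).Nontrivial) (hconn : (G.induce {w}ᶜ).Connected)
    (hFw : ∀ e ∈ G.edgeSet, w ∉ e → e ∈ F) : F ∈ scrS G v₁ := by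
  have hmem : ∀ x y : ({w}ᶜ : Set V), G.Adj x y → s(x.1, y.1) ∈ F := fun x y hxy =>
    hFw s(x.1, y.1) hxy fun hw =>
      (Sym2.mem_iff.1 hw).elim (fun h => x.2 h.symm) fun h => y.2 h.symm
  let toF : G.induce {w}ᶜ →g SimpleGraph.fromEdgeSet (F : Set (Sym2 V)) :=
    ⟨Subtype.val, fun {x y} hxy =>
      (SimpleGraph.fromEdgeSet_adj _).2 ⟨hmem x y hxy, G.ne_of_adj hxy⟩⟩
  have hreach : ∀ x, memVerts F x →
      (SimpleGraph.fromEdgeSet (F : Set (Sym2 V))).Reachable v₁ x := by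
    rintro x ⟨e, he, hxe⟩
    have hreach_ne : ∀ z, z ≠ w →
        (SimpleGraph.fromEdgeSet (F : Set (Sym2 V))).Reachable v₁ z := fun z hz =>
      (hconn.preconnected ⟨v₁, hv₁⟩ ⟨z, hz⟩).map toF
    by_cases hxw : x = w
    · obtain ⟨z, rfl⟩ := Sym2.mem_iff_exists.1 hxe
      have hxz : x ≠ z := G.ne_of_adj (SimpleGraph.mem_edgeFinset.1 (hF he))
      exact (hreach_ne z (hxw ▸ hxz.symm)).trans
        ((SimpleGraph.fromEdgeSet_adj _).2 ⟨he, hxz⟩).symm.reachable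
    · exact hreach_ne x hxw
  have := hnt.coe_sort
  obtain ⟨z, hz⟩ := hconn.preconnected.exists_adj_of_nontrivial ⟨v₁, hv₁⟩
  exact ⟨hF, ⟨s(v₁, z), hmem ⟨v₁, hv₁⟩ z hz, Sym2.mem_mk_left _ _⟩,
    fun x y hx hy => (hreach x hx).symm.trans (hreach y hy)⟩

end NonCutVertex

section CoverExponent

variable {V : Type} [Fintype V] {G : SimpleGraph V} [DecidableRel G.Adj]

lemma exists_mem_scrS_of_not_edgesMeet (hG : G.Connected) (hmeet : ¬ EdgesMeet G) (v₁ : V) :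
    ∃ F ∈ scrS G v₁ \ {G.edgeFinset}, ∃ a b, G.Adj a b ∧
      a ∉ exitVerts G F ∧ b ∉ exitVerts G F := by
  have : Nontrivial V := by
    by_contra! hV
    exact hmeet fun e he => by
      induction e with | _ x y => exact absurd (Subsingleton.elim x y) (G.ne_of_adj he)
  obtain ⟨w, hwv₁, hconn⟩ := exists_ne_connected_induce_compl hG v₁
  obtain ⟨u₀, hwu₀⟩ := hG.preconnected.exists_adj_of_nontrivial w
  obtain ⟨u, hwu, ⟨a, b⟩, hab, hdisj⟩ :
      ∃ u, G.Adj w u ∧ ∃ e ∈ G.edgeSet, ¬ edgeAdj s(w, u) e := by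
    by_contra! h
    exact hmeet (edgesMeet_of_forall_edgeAdj hwu₀ h)
  have hoff : ∀ x, x ∈ s(a, b) → x ∉ exitVerts G (G.edgeFinset.erase s(w, u)) := by
    intro x hx hexit
    obtain ⟨z, hxz, hz⟩ := mem_exitVerts.1 hexit
    have hxz_eq : s(x, z) = s(w, u) := by
      by_contra hne
      exact hz (Finset.mem_erase.2 ⟨hne, SimpleGraph.mem_edgeFinset.2 hxz⟩)
    exact hdisj ⟨x, hxz_eq ▸ Sym2.mem_mk_left x z, hx⟩
  have hwab : w ∉ s(a, b) := fun hw => hdisj ⟨w, Sym2.mem_mk_left w u, hw⟩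
  have hnt : ({w}ᶜ : Set V).Nontrivial :=
    ⟨a, fun h => hwab (h ▸ Sym2.mem_mk_left a b), b, fun h => hwab (h ▸ Sym2.mem_mk_right a b),
      G.ne_of_adj hab⟩
  have hmem : G.edgeFinset.erase s(w, u) ∈ scrS G v₁ :=
    mem_scrS_of_connected_induce_compl (Finset.erase_subset _ _) hwv₁.symm hnt hconn
      fun e he hwe => Finset.mem_erase.2
        ⟨fun h => hwe (h ▸ Sym2.mem_mk_left w u), SimpleGraph.mem_edgeFinset.2 he⟩
  have hproper : G.edgeFinset.erase s(w, u) ≠ G.edgeFinset :=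
    Finset.erase_ne_self.2 (SimpleGraph.mem_edgeFinset.2 hwu)
  exact ⟨_, ⟨hmem, hproper⟩, a, b, hab, hoff a (Sym2.mem_mk_left a b),
    hoff b (Sym2.mem_mk_right a b)⟩

variable [DecidableEq V]

lemma tendsto_alphaC1_nhds_top (hmeet : EdgesMeet G) (v₁ : V) :
    Tendsto (alphaC1 G v₁) (𝓝[>] 0) (𝓝 ⊤) := by
  have := Nonempty.intro v₁
  exact tendsto_alphaC_nhds_top hmeet fun F hF => hF.1.1.ssubset_of_ne hF.2

lemma exists_tendsto_alphaC1 (hG : G.Connected) (hmeet : ¬ EdgesMeet G) (v₁ : V) :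
    ∃ L : ℝ, Tendsto (alphaC1 G v₁) (𝓝[>] 0) (𝓝 (L : EReal)) := by
  obtain ⟨F, hF, a, b, hab, ha, hb⟩ := exists_mem_scrS_of_not_edgesMeet hG hmeet v₁
  exact exists_tendsto_alphaC_of_le fun δ hδ => alphaC_le_log_degree hδ hF hab ha hb

end CoverExponent

/-- `α_c^1(δ) → ∞` as `δ → 0+` iff `G` is a `3`-vertex connected
graph or a star-shaped graph; otherwise the limit is finite. -/
theorem orrw_cover_exponent_at_zero {V : Type} [Fintype V] [DecidableEq V]
    (G : SimpleGraph V) [DecidableRel G.Adj] (hG : G.Connected)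
    (hV : 3 ≤ Fintype.card V) (v₁ : V) :
    ((Fintype.card V = 3 ∨
        (∃ c : V, (∀ v : V, v ≠ c → G.Adj c v) ∧
          ∀ u v : V, G.Adj u v → u = c ∨ v = c)) →
      Tendsto (fun d : ℝ => alphaC1 G v₁ d) (nhdsWithin 0 (Set.Ioi 0))
        (nhds (⊤ : EReal))) ∧
    (¬ (Fintype.card V = 3 ∨
        (∃ c : V, (∀ v : V, v ≠ c → G.Adj c v) ∧
          ∀ u v : V, G.Adj u v → u = c ∨ v = c)) →
      ∃ L : ℝ, Tendsto (fun d : ℝ => alphaC1 G v₁ d) (nhdsWithin 0 (Set.Ioi 0))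
        (nhds ((L : ℝ) : EReal))) := by
  simp only [← eq_starGraph_iff, ← edgesMeet_iff hG]
  exact ⟨fun hmeet => tendsto_alphaC1_nhds_top hmeet v₁,
    fun hmeet => exists_tendsto_alphaC1 hG hmeet v₁⟩

end ORRW
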